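/- arXiv:1701.06611 — 4 statements merged into one kernel-verified Lean document; each statement's English description precedes it below -/
import Mathlib

section
/- Let Ω ⊆ ℝ^N be a bounded open set, p ≥ 2 a real number and q = p/(p−1). Let B : L^q(Ω) → L^p(Ω) be a positive continuous linear operator and g ∈ L^p(Ω). Suppose (y_k) and (z_k) are sequences in L^p(Ω) such that y_k → y₀ strongly in L^p(Ω), z_k → z₀ weakly in L^p(Ω), and for every k the Hammerstein equation z_k + B(|y_k|^{p−2}y_k + |z_k|^{p−2}z_k) = g holds in L^p(Ω). Then the limit pair satisfies z₀ + B(|y₀|^{p−2}y₀ + |z₀|^{p−2}z₀) = g. -/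
open MeasureTheory Filter Topology

/-!
For `p ≥ 2` the duality map `J u = ‖u ·‖ ^ (p - 2) • u` from `L^p` to `L^q` is continuous and
satisfies `c ‖u - v‖ ^ p ≤ ⟪J u - J v, u - v⟫`. Subtracting two of the equations and using the
positivity of `B` gives `⟪J (y i) - J (y j) + (J (z i) - J (z j)), z i - z j⟫ ≤ 0`, so that
`c ‖z i - z j‖ ^ (p - 1) ≤ ‖J (y i) - J (y j)‖`. As `J (y i)` converges, `z` is Cauchy: its weak
convergence is strong, and one passes to the limit in the equation by continuity.
-/

section Pointwise

variable {s : ℝ}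

lemma rpow_sub_rpow_mul_le (hs : 0 ≤ s) {x y : ℝ} (hx : 0 ≤ x) (hy : 0 ≤ y) :
    (x ^ s - y ^ s) * y ≤ s * x ^ s * (x - y) := by
  have h_young : x ^ s * y ≤ s / (s + 1) * x ^ (s + 1) + 1 / (s + 1) * y ^ (s + 1) := by
    convert Real.geom_mean_le_arith_mean2_weighted (w₁ := s / (s + 1)) (w₂ := 1 / (s + 1))
      (p₁ := x ^ (s + 1)) (p₂ := y ^ (s + 1)) (by positivity) (by positivity) (by positivity)
      (by positivity) (by field_simp) using 2
    · rw [← Real.rpow_mul hx, mul_div_cancel₀ _ (by positivity)]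
    · rw [← Real.rpow_mul hy, mul_one_div_cancel (by positivity), Real.rpow_one]
  have h_scaled : (s + 1) * (x ^ s * y) ≤ s * x ^ (s + 1) + y ^ (s + 1) := by
    field_simp at h_young
    linarith
  rw [Real.rpow_add_one' hx (by positivity), Real.rpow_add_one' hy (by positivity)] at h_scaled
  linarith

lemma norm_norm_rpow_smul_sub_le {E : Type*} [SeminormedAddCommGroup E] [NormedSpace ℝ E]
    (hs : 0 ≤ s) (a b : E) :
    ‖‖a‖ ^ s • a - ‖b‖ ^ s • b‖ ≤ (s + 1) * (‖a - b‖ * (‖a‖ + ‖b‖) ^ s) := by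
  wlog hab : ‖b‖ ≤ ‖a‖ generalizing a b
  · simpa only [norm_sub_rev, add_comm] using this b a (le_of_not_ge hab)
  have h_mono : ‖b‖ ^ s ≤ ‖a‖ ^ s := by gcongr
  calc ‖‖a‖ ^ s • a - ‖b‖ ^ s • b‖
      = ‖‖a‖ ^ s • (a - b) + (‖a‖ ^ s - ‖b‖ ^ s) • b‖ := by congr 1; module
    _ ≤ ‖a‖ ^ s * ‖a - b‖ + (‖a‖ ^ s - ‖b‖ ^ s) * ‖b‖ := by
        refine (norm_add_le _ _).trans_eq ?_
        rw [norm_smul, norm_smul, Real.norm_of_nonneg (by positivity),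
          Real.norm_of_nonneg (sub_nonneg.2 h_mono)]
    _ ≤ ‖a‖ ^ s * ‖a - b‖ + s * ‖a‖ ^ s * (‖a‖ - ‖b‖) := by
        gcongr ‖a‖ ^ s * ‖a - b‖ + ?_
        exact rpow_sub_rpow_mul_le hs (norm_nonneg a) (norm_nonneg b)
    _ ≤ ‖a‖ ^ s * ‖a - b‖ + s * ‖a‖ ^ s * ‖a - b‖ := by
        gcongr
        exact norm_sub_norm_le a b
    _ = (s + 1) * (‖a - b‖ * ‖a‖ ^ s) := by ring
    _ ≤ (s + 1) * (‖a - b‖ * (‖a‖ + ‖b‖) ^ s) := by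
        gcongr
        exact le_add_of_nonneg_right (norm_nonneg b)

lemma rpow_sub_rpow_mul_sq_sub_sq_nonneg (hs : 0 ≤ s) {x y : ℝ} (hx : 0 ≤ x) (hy : 0 ≤ y) :
    0 ≤ (x ^ s - y ^ s) * (x ^ 2 - y ^ 2) := by
  rcases le_total x y with h | h
  · exact mul_nonneg_of_nonpos_of_nonpos
      (sub_nonpos.2 (by gcongr)) (sub_nonpos.2 (by gcongr))
  · exact mul_nonneg (sub_nonneg.2 (by gcongr)) (sub_nonneg.2 (by gcongr))

lemma norm_sub_rpow_le {E : Type*} [SeminormedAddCommGroup E] (hs : 0 ≤ s) (a b : E) :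
    ‖a - b‖ ^ s ≤ 2 ^ s * (‖a‖ ^ s + ‖b‖ ^ s) := by
  have h_max : ‖a - b‖ ≤ 2 * max ‖a‖ ‖b‖ := by
    linarith [norm_sub_le a b, le_max_left ‖a‖ ‖b‖, le_max_right ‖a‖ ‖b‖]
  calc ‖a - b‖ ^ s ≤ (2 * max ‖a‖ ‖b‖) ^ s := by gcongr
    _ = 2 ^ s * max ‖a‖ ‖b‖ ^ s := Real.mul_rpow zero_le_two (by positivity)
    _ ≤ 2 ^ s * (‖a‖ ^ s + ‖b‖ ^ s) := by
      gcongr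
      rcases max_choice ‖a‖ ‖b‖ with h | h <;> rw [h]
      · exact le_add_of_nonneg_right (by positivity)
      · exact le_add_of_nonneg_left (by positivity)

variable {H : Type*} [SeminormedAddCommGroup H] [InnerProductSpace ℝ H]

lemma inner_norm_rpow_smul_sub (a b : H) :
    inner ℝ (‖a‖ ^ s • a - ‖b‖ ^ s • b) (a - b) =
      (‖a‖ ^ s + ‖b‖ ^ s) / 2 * ‖a - b‖ ^ 2
        + (‖a‖ ^ s - ‖b‖ ^ s) * (‖a‖ ^ 2 - ‖b‖ ^ 2) / 2 := by
  rw [norm_sub_sq_real]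
  simp only [inner_sub_left, inner_sub_right, real_inner_smul_left, real_inner_self_eq_norm_sq,
    real_inner_comm a b]
  ring

lemma mul_norm_sub_rpow_le_inner (hs : 0 ≤ s) (a b : H) :
    (2 * 2 ^ s)⁻¹ * ‖a - b‖ ^ (s + 2) ≤
      inner ℝ (‖a‖ ^ s • a - ‖b‖ ^ s • b) (a - b) := by
  have h_nonneg := rpow_sub_rpow_mul_sq_sub_sq_nonneg hs (norm_nonneg a) (norm_nonneg b)
  calc (2 * 2 ^ s)⁻¹ * ‖a - b‖ ^ (s + 2)
      = (2 * 2 ^ s)⁻¹ * ‖a - b‖ ^ s * ‖a - b‖ ^ 2 := by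
        rw [Real.rpow_add_of_nonneg (norm_nonneg _) hs zero_le_two, Real.rpow_two, mul_assoc]
    _ ≤ (2 * 2 ^ s)⁻¹ * (2 ^ s * (‖a‖ ^ s + ‖b‖ ^ s)) * ‖a - b‖ ^ 2 := by
        gcongr
        exact norm_sub_rpow_le hs a b
    _ = (‖a‖ ^ s + ‖b‖ ^ s) / 2 * ‖a - b‖ ^ 2 := by field_simp
    _ ≤ _ := by
        rw [inner_norm_rpow_smul_sub]
        linarith

end Pointwise

/-- `J : E → E'` is uniformly monotone of power type `r` for the pairing `L` of `E'` with `E`: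
`⟪J u - J v, u - v⟫` dominates a positive multiple of `‖u - v‖ ^ r`. A pairing is used instead
of `E' = StrongDual ℝ E`, so that `L^q` need not be identified with the dual of `L^p`. -/
def UniformlyMonotone {E E' : Type*} [NormedAddCommGroup E] [NormedSpace ℝ E]
    [NormedAddCommGroup E'] [NormedSpace ℝ E'] (L : E' →L[ℝ] E →L[ℝ] ℝ) (J : E → E') (r : ℝ) :
    Prop :=
  ∃ c > 0, ∀ u v, c * ‖u - v‖ ^ r ≤ L (J u - J v) (u - v)

namespace UniformlyMonotone

variable {E E' : Type*} [NormedAddCommGroup E] [NormedSpace ℝ E]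
  [NormedAddCommGroup E'] [NormedSpace ℝ E'] {L : E' →L[ℝ] E →L[ℝ] ℝ} {J : E → E'} {r : ℝ}
  {ι : Type*} {l : Filter ι}

lemma eq_of_forall_pairing_eq (hJ : UniformlyMonotone L J r) {u v : E}
    (h : ∀ w, L w u = L w v) : u = v := by
  obtain ⟨c, hc, hJ⟩ := hJ
  by_contra hne
  have h_pos : 0 < c * ‖u - v‖ ^ r := by
    have := norm_pos_iff.2 (sub_ne_zero.2 hne)
    positivity
  have h_zero : L (J u - J v) (u - v) = 0 := by rw [map_sub, h, sub_self]
  exact (h_pos.trans_le (hJ u v)).ne' h_zero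

lemma exists_norm_sub_le (hJ : UniformlyMonotone L J r) (hr : 1 < r) :
    ∃ C, ∀ w u v, L (w + (J u - J v)) (u - v) ≤ 0 →
      ‖u - v‖ ≤ (C * ‖w‖) ^ (r - 1)⁻¹ := by
  obtain ⟨c, hc, hJ⟩ := hJ
  refine ⟨c⁻¹ * ‖L‖, fun w u v h => ?_⟩
  rcases (norm_nonneg (u - v)).eq_or_lt with h_zero | h_pos
  · rw [← h_zero]
    positivity
  have h_bound : c * ‖u - v‖ ^ (r - 1) * ‖u - v‖ ≤ ‖L‖ * ‖w‖ * ‖u - v‖ := by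
    calc c * ‖u - v‖ ^ (r - 1) * ‖u - v‖ = c * ‖u - v‖ ^ r := by
          rw [mul_assoc, ← Real.rpow_add_one h_pos.ne', sub_add_cancel]
      _ ≤ L (J u - J v) (u - v) := hJ u v
      _ ≤ -L w (u - v) := by
          rw [map_add, add_apply] at h
          linarith
      _ ≤ ‖L w (u - v)‖ := neg_le_abs _
      _ ≤ ‖L‖ * ‖w‖ * ‖u - v‖ := L.le_opNorm₂ w (u - v)
  rw [Real.le_rpow_inv_iff_of_pos h_pos.le (by positivity) (sub_pos.2 hr), mul_assoc,
    le_inv_mul_iff₀ hc]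
  exact le_of_mul_le_mul_right h_bound h_pos

lemma cauchy_map (hJ : UniformlyMonotone L J r) (hr : 1 < r) {f : ι → E'} {z : ι → E}
    (hf : Cauchy (map f l))
    (h : ∀ i j, L ((f i - f j) + (J (z i) - J (z j))) (z i - z j) ≤ 0) :
    Cauchy (map z l) := by
  obtain ⟨C, hC⟩ := hJ.exists_norm_sub_le hr
  rw [cauchy_map_iff, tendsto_uniformity_iff_dist_tendsto_zero] at hf ⊢
  refine ⟨hf.1, squeeze_zero (fun _ => dist_nonneg)
    (fun k => (dist_eq_norm _ _).trans_le (hC _ _ _ (h k.1 k.2))) ?_⟩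
  have h_exp : 0 < (r - 1)⁻¹ := inv_pos.2 (sub_pos.2 hr)
  simpa only [dist_eq_norm, mul_zero, Real.zero_rpow h_exp.ne'] using
    (hf.2.const_mul C).rpow_const (Or.inr h_exp.le)

variable {B : E' →L[ℝ] E} {f : ι → E'} {f₀ : E'} {z : ι → E} {z₀ g : E}

theorem tendsto_of_weak_tendsto_of_hammerstein [CompleteSpace E] [l.NeBot]
    (hJ : UniformlyMonotone L J r) (hr : 1 < r) (hB : ∀ w, 0 ≤ L w (B w))
    (hf : Tendsto f l (𝓝 f₀)) (hz : ∀ w, Tendsto (fun i => L w (z i)) l (𝓝 (L w z₀)))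
    (h_eq : ∀ i, z i + B (f i + J (z i)) = g) : Tendsto z l (𝓝 z₀) := by
  have h_neg (i j : ι) : L ((f i - f j) + (J (z i) - J (z j))) (z i - z j) ≤ 0 := by
    have h_diff : z i - z j = -B ((f i - f j) + (J (z i) - J (z j))) := by
      rw [← add_sub_add_comm, map_sub]
      linear_combination (norm := module) h_eq i - h_eq j
    rw [h_diff, map_neg]
    exact neg_nonpos.2 (hB _)
  obtain ⟨z', hz'⟩ := cauchy_map_iff_exists_tendsto.1 (hJ.cauchy_map hr hf.cauchy_map h_neg)
  have h_limit : z' = z₀ := hJ.eq_of_forall_pairing_eq fun w =>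
    tendsto_nhds_unique (((L w).continuous.tendsto z').comp hz') (hz w)
  rwa [h_limit] at hz'

theorem hammerstein_limit [CompleteSpace E] [l.NeBot]
    (hJ : UniformlyMonotone L J r) (hr : 1 < r) (hJc : Continuous J) (hB : ∀ w, 0 ≤ L w (B w))
    (hf : Tendsto f l (𝓝 f₀)) (hz : ∀ w, Tendsto (fun i => L w (z i)) l (𝓝 (L w z₀)))
    (h_eq : ∀ i, z i + B (f i + J (z i)) = g) : z₀ + B (f₀ + J z₀) = g := by
  have hz' := hJ.tendsto_of_weak_tendsto_of_hammerstein hr hB hf hz h_eq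
  have h_lim := hz'.add ((B.continuous.tendsto _).comp (hf.add ((hJc.tendsto z₀).comp hz')))
  exact tendsto_nhds_unique (h_lim.congr h_eq) tendsto_const_nhds

end UniformlyMonotone

section Lp

open scoped ENNReal

variable {α : Type*} [MeasurableSpace α] {μ : Measure α}

lemma holderTriple_ofReal_add_one_mul {s : ℝ} (hs : 0 < s) (r : ℝ≥0∞) :
    ENNReal.HolderTriple (ENNReal.ofReal (s + 1) * r)
      (ENNReal.ofReal (s + 1) * r / ENNReal.ofReal s) r := ⟨by
  have h₀ : ENNReal.ofReal (s + 1) ≠ 0 := (ENNReal.ofReal_pos.2 (by positivity)).ne'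
  rw [ENNReal.inv_div (.inl ENNReal.ofReal_ne_top) (.inl (ENNReal.ofReal_pos.2 hs).ne'),
    div_eq_mul_inv, ENNReal.mul_inv (.inl h₀) (.inl ENNReal.ofReal_ne_top), ← one_add_mul,
    ← ENNReal.ofReal_one, ← ENNReal.ofReal_add zero_le_one hs.le, add_comm, ← mul_assoc,
    ENNReal.mul_inv_cancel h₀ ENNReal.ofReal_ne_top, one_mul]⟩

lemma eLpNorm_norm_mul_norm_rpow_le {E F : Type*} [NormedAddCommGroup E] [NormedAddCommGroup F]
    {f : α → E} {g : α → F} (hf : AEStronglyMeasurable f μ) (hg : AEStronglyMeasurable g μ)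
    {s : ℝ} (hs : 0 ≤ s) (r : ℝ≥0∞) :
    eLpNorm (fun x => ‖f x‖ * ‖g x‖ ^ s) r μ ≤
      eLpNorm f (ENNReal.ofReal (s + 1) * r) μ *
        eLpNorm g (ENNReal.ofReal (s + 1) * r) μ ^ s := by
  rcases hs.eq_or_lt with rfl | hs
  · simp
  have := holderTriple_ofReal_add_one_mul hs r
  have h_rpow : eLpNorm (fun x => ‖g x‖ ^ s)
      (ENNReal.ofReal (s + 1) * r / ENNReal.ofReal s) μ =
        eLpNorm g (ENNReal.ofReal (s + 1) * r) μ ^ s := by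
    rw [eLpNorm_norm_rpow g hs,
      ENNReal.div_mul_cancel (ENNReal.ofReal_pos.2 hs).ne' ENNReal.ofReal_ne_top]
  rw [← eLpNorm_norm f, ← h_rpow]
  exact eLpNorm_smul_le_mul_eLpNorm (φ := fun x => ‖f x‖) (f := fun x => ‖g x‖ ^ s)
    (hg.norm.aemeasurable.pow_const s).aestronglyMeasurable hf.norm

lemma norm_Lp_rpow_eq_integral {E : Type*} [NormedAddCommGroup E] {p : ℝ} (hp : 0 < p)
    (u : Lp E (ENNReal.ofReal p) μ) : ‖u‖ ^ p = ∫ x, ‖u x‖ ^ p ∂μ := by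
  have h_nonneg : 0 ≤ ∫ x, ‖u x‖ ^ p ∂μ := integral_nonneg fun x => by positivity
  rw [Lp.norm_def, (Lp.memLp u).eLpNorm_eq_integral_rpow_norm (ENNReal.ofReal_pos.2 hp).ne'
    ENNReal.ofReal_ne_top, ENNReal.toReal_ofReal hp.le, ENNReal.toReal_ofReal (by positivity),
    Real.rpow_inv_rpow h_nonneg hp.ne']

lemma memLp_norm_rpow_smul {E : Type*} [NormedAddCommGroup E] [NormedSpace ℝ E] {p q : ℝ}
    (hpq : p.HolderConjugate q) {f : α → E} (hf : MemLp f (ENNReal.ofReal p) μ) :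
    MemLp (fun x => ‖f x‖ ^ (p - 2) • f x) (ENNReal.ofReal q) μ := by
  have h_pow := hf.norm_rpow_div (ENNReal.ofReal (p - 1))
  rw [ENNReal.toReal_ofReal hpq.sub_one_pos.le, ← ENNReal.ofReal_div_of_pos hpq.sub_one_pos,
    ← hpq.conjugate_eq] at h_pow
  refine h_pow.mono ?_ (ae_of_all _ fun x => ?_)
  · exact (hf.1.norm.aemeasurable.pow_const _).aestronglyMeasurable.smul hf.1
  · rw [norm_smul, Real.norm_of_nonneg (by positivity), Real.norm_of_nonneg (by positivity),
      ← Real.rpow_add_one' (norm_nonneg _) (by linarith [hpq.lt]),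
      show p - 2 + 1 = p - 1 by ring]

/-- The pairing `⟪w, u⟫ = ∫ ⟪w x, u x⟫` of `L^q` with `L^p`, for conjugate exponents `p` and `q`. -/
noncomputable def lpInnerPairing {H : Type*} [NormedAddCommGroup H] [InnerProductSpace ℝ H]
    {p q : ℝ} [Fact (1 ≤ ENNReal.ofReal p)] [Fact (1 ≤ ENNReal.ofReal q)]
    (hpq : p.HolderConjugate q) :
    Lp H (ENNReal.ofReal q) μ →L[ℝ] Lp H (ENNReal.ofReal p) μ →L[ℝ] ℝ :=
  have := hpq.symm.ennrealOfReal
  (innerSL ℝ).lpPairing μ (ENNReal.ofReal q) (ENNReal.ofReal p)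

lemma lpInnerPairing_apply {H : Type*} [NormedAddCommGroup H] [InnerProductSpace ℝ H]
    {p q : ℝ} [Fact (1 ≤ ENNReal.ofReal p)] [Fact (1 ≤ ENNReal.ofReal q)]
    (hpq : p.HolderConjugate q) (w : Lp H (ENNReal.ofReal q) μ) (u : Lp H (ENNReal.ofReal p) μ) :
    lpInnerPairing hpq w u = ∫ x, inner ℝ (w x) (u x) ∂μ :=
  have := hpq.symm.ennrealOfReal
  ContinuousLinearMap.lpPairing_eq_integral _ w u

/-- The duality map `u ↦ (x ↦ ‖u x‖ ^ (p - 2) • u x)` from `L^p` to `L^q`, for conjugate exponents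
`p` and `q`. It is the gradient of `p⁻¹ ‖u‖ ^ p`, so it is not normalised to preserve the norm. -/
noncomputable def lpDualityMap {E : Type*} [NormedAddCommGroup E] [NormedSpace ℝ E] {p q : ℝ}
    (hpq : p.HolderConjugate q) (u : Lp E (ENNReal.ofReal p) μ) : Lp E (ENNReal.ofReal q) μ :=
  (memLp_norm_rpow_smul hpq (Lp.memLp u)).toLp

namespace lpDualityMap

variable {E H : Type*} [NormedAddCommGroup E] [NormedSpace ℝ E]
  [NormedAddCommGroup H] [InnerProductSpace ℝ H] {p q : ℝ}

lemma coeFn (hpq : p.HolderConjugate q) (u : Lp E (ENNReal.ofReal p) μ) :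
    lpDualityMap hpq u =ᵐ[μ] fun x => ‖u x‖ ^ (p - 2) • u x :=
  MemLp.coeFn_toLp _

lemma coeFn_add (hpq : p.HolderConjugate q) (u v : Lp E (ENNReal.ofReal p) μ) :
    (lpDualityMap hpq u + lpDualityMap hpq v : Lp E (ENNReal.ofReal q) μ) =ᵐ[μ]
      fun x => ‖u x‖ ^ (p - 2) • u x + ‖v x‖ ^ (p - 2) • v x :=
  (Lp.coeFn_add _ _).trans ((coeFn hpq u).add (coeFn hpq v))

lemma coeFn_sub (hpq : p.HolderConjugate q) (u v : Lp E (ENNReal.ofReal p) μ) :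
    (lpDualityMap hpq u - lpDualityMap hpq v : Lp E (ENNReal.ofReal q) μ) =ᵐ[μ]
      fun x => ‖u x‖ ^ (p - 2) • u x - ‖v x‖ ^ (p - 2) • v x :=
  (Lp.coeFn_sub _ _).trans ((coeFn hpq u).sub (coeFn hpq v))

lemma eLpNorm_sub_le (hp : 2 ≤ p) (hpq : p.HolderConjugate q)
    (u v : Lp E (ENNReal.ofReal p) μ) :
    eLpNorm (lpDualityMap hpq u - lpDualityMap hpq v : Lp E (ENNReal.ofReal q) μ)
        (ENNReal.ofReal q) μ ≤
      ENNReal.ofReal (p - 1) * (eLpNorm (u - v : Lp E (ENNReal.ofReal p) μ) (ENNReal.ofReal p) μ *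
        (eLpNorm u (ENNReal.ofReal p) μ + eLpNorm v (ENNReal.ofReal p) μ) ^ (p - 2)) := by
  have hs : 0 ≤ p - 2 := sub_nonneg.2 hp
  have hu := (Lp.aestronglyMeasurable u).norm
  have hv := (Lp.aestronglyMeasurable v).norm
  have h_exp : ENNReal.ofReal (p - 2 + 1) * ENNReal.ofReal q = ENNReal.ofReal p := by
    rw [← ENNReal.ofReal_mul (by positivity), show p - 2 + 1 = p - 1 by ring,
      hpq.sub_one_mul_conj]
  have h_pointwise : ∀ᵐ x ∂μ,
      ‖(lpDualityMap hpq u - lpDualityMap hpq v : Lp E (ENNReal.ofReal q) μ) x‖ ≤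
        (p - 1) * ‖‖(u - v : Lp E (ENNReal.ofReal p) μ) x‖ * ‖‖u x‖ + ‖v x‖‖ ^ (p - 2)‖ := by
    filter_upwards [coeFn_sub hpq u v, Lp.coeFn_sub u v] with x hJx hx
    rw [hJx, hx, Pi.sub_apply, Real.norm_of_nonneg (by positivity : 0 ≤ ‖u x‖ + ‖v x‖),
      Real.norm_of_nonneg (by positivity)]
    convert norm_norm_rpow_smul_sub_le hs (u x) (v x) using 2
    ring
  have h_holder := eLpNorm_norm_mul_norm_rpow_le
    (Lp.aestronglyMeasurable (u - v)) (hu.add hv) hs (ENNReal.ofReal q)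
  have h_add : eLpNorm (fun x => ‖u x‖ + ‖v x‖) (ENNReal.ofReal p) μ ≤
      eLpNorm u (ENNReal.ofReal p) μ + eLpNorm v (ENNReal.ofReal p) μ := by
    simpa only [eLpNorm_norm] using! eLpNorm_add_le hu hv (ENNReal.one_le_ofReal.2 hpq.lt.le)
  rw [h_exp] at h_holder
  refine (eLpNorm_le_mul_eLpNorm_of_ae_le_mul h_pointwise _).trans ?_
  gcongr
  refine h_holder.trans ?_
  gcongr
  exact h_add

lemma norm_sub_le (hp : 2 ≤ p) (hpq : p.HolderConjugate q) (u v : Lp E (ENNReal.ofReal p) μ) :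
    ‖lpDualityMap hpq u - lpDualityMap hpq v‖ ≤
      (p - 1) * (‖u - v‖ * (‖u‖ + ‖v‖) ^ (p - 2)) := by
  have h_ne_top : eLpNorm u (ENNReal.ofReal p) μ + eLpNorm v (ENNReal.ofReal p) μ ≠ ∞ :=
    ENNReal.add_ne_top.2 ⟨Lp.eLpNorm_ne_top u, Lp.eLpNorm_ne_top v⟩
  have h := ENNReal.toReal_mono (ENNReal.mul_ne_top ENNReal.ofReal_ne_top
    (ENNReal.mul_ne_top (Lp.eLpNorm_ne_top _)
      (ENNReal.rpow_ne_top_of_nonneg (sub_nonneg.2 hp) h_ne_top))) (eLpNorm_sub_le hp hpq u v)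
  rwa [ENNReal.toReal_mul, ENNReal.toReal_mul, ← ENNReal.toReal_rpow,
    ENNReal.toReal_add (Lp.eLpNorm_ne_top u) (Lp.eLpNorm_ne_top v),
    ENNReal.toReal_ofReal hpq.sub_one_pos.le, ← Lp.norm_def, ← Lp.norm_def, ← Lp.norm_def,
    ← Lp.norm_def] at h

protected lemma continuous [Fact (1 ≤ ENNReal.ofReal p)] [Fact (1 ≤ ENNReal.ofReal q)]
    (hp : 2 ≤ p) (hpq : p.HolderConjugate q) :
    Continuous (lpDualityMap hpq : Lp E (ENNReal.ofReal p) μ → Lp E (ENNReal.ofReal q) μ) := by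
  refine continuous_iff_continuousAt.2 fun v => tendsto_iff_norm_sub_tendsto_zero.2 ?_
  refine squeeze_zero (fun _ => norm_nonneg _) (fun u => norm_sub_le hp hpq u v) ?_
  have h_bound : Continuous fun u : Lp E (ENNReal.ofReal p) μ =>
      (p - 1) * (‖u - v‖ * (‖u‖ + ‖v‖) ^ (p - 2)) := by
    have := (continuous_norm.add_const ‖v‖).rpow_const
      fun u : Lp E (ENNReal.ofReal p) μ => Or.inr (sub_nonneg.2 hp)
    fun_prop
  simpa only [sub_self, norm_zero, zero_mul, mul_zero] using h_bound.tendsto v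

variable [Fact (1 ≤ ENNReal.ofReal p)] [Fact (1 ≤ ENNReal.ofReal q)]

lemma uniformlyMonotone (hp : 2 ≤ p) (hpq : p.HolderConjugate q) :
    UniformlyMonotone (lpInnerPairing hpq)
      (lpDualityMap hpq : Lp H (ENNReal.ofReal p) μ → Lp H (ENNReal.ofReal q) μ) p := by
  refine ⟨(2 * 2 ^ (p - 2))⁻¹, by positivity, fun u v => ?_⟩
  rw [lpInnerPairing_apply, norm_Lp_rpow_eq_integral hpq.pos, ← integral_const_mul]
  refine integral_mono_ae ?_ ?_ ?_
  · have h := (Lp.memLp (u - v)).integrable_norm_rpow (ENNReal.ofReal_pos.2 hpq.pos).ne'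
      ENNReal.ofReal_ne_top
    rw [ENNReal.toReal_ofReal hpq.pos.le] at h
    exact h.const_mul _
  · have := hpq.symm.ennrealOfReal
    exact memLp_one_iff_integrable.1
      ((innerSL ℝ).memLp_of_bilin 1 (Lp.memLp _) (Lp.memLp _))
  · filter_upwards [coeFn_sub hpq u v, Lp.coeFn_sub u v] with x hJx hx
    rw [hJx, hx, Pi.sub_apply]
    simpa only [sub_add_cancel] using
      mul_norm_sub_rpow_le_inner (sub_nonneg.2 hp) (u x) (v x)

end lpDualityMap

end Lp

theorem hammerstein_limit_equation_general
    {α : Type*} [MeasurableSpace α] {μ : Measure α}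
    {H : Type*} [NormedAddCommGroup H] [InnerProductSpace ℝ H] [CompleteSpace H]
    {ι : Type*} {l : Filter ι} [l.NeBot]
    {p q : ℝ} (hp : 2 ≤ p) (hpq : p.HolderConjugate q)
    [Fact (1 ≤ ENNReal.ofReal p)] [Fact (1 ≤ ENNReal.ofReal q)]
    (B : Lp H (ENNReal.ofReal q) μ →L[ℝ] Lp H (ENNReal.ofReal p) μ)
    (hB : ∀ w : Lp H (ENNReal.ofReal q) μ, 0 ≤ ∫ x, inner ℝ (w x) (B w x) ∂μ)
    {g : Lp H (ENNReal.ofReal p) μ} {y z : ι → Lp H (ENNReal.ofReal p) μ}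
    {y₀ z₀ : Lp H (ENNReal.ofReal p) μ} (hy : Tendsto y l (𝓝 y₀))
    (hz : ∀ w : Lp H (ENNReal.ofReal q) μ,
      Tendsto (fun i => ∫ x, inner ℝ (w x) (z i x) ∂μ) l (𝓝 (∫ x, inner ℝ (w x) (z₀ x) ∂μ)))
    {F : ι → Lp H (ENNReal.ofReal q) μ}
    (hF : ∀ i, F i =ᵐ[μ] fun x => ‖y i x‖ ^ (p - 2) • y i x + ‖z i x‖ ^ (p - 2) • z i x)
    (h_eq : ∀ i, z i + B (F i) = g) :
    ∃ F₀ : Lp H (ENNReal.ofReal q) μ,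
      F₀ =ᵐ[μ] (fun x => ‖y₀ x‖ ^ (p - 2) • y₀ x + ‖z₀ x‖ ^ (p - 2) • z₀ x) ∧
      z₀ + B F₀ = g := by
  have hFJ (i : ι) : F i = lpDualityMap hpq (y i) + lpDualityMap hpq (z i) :=
    Lp.ext ((hF i).trans (lpDualityMap.coeFn_add hpq (y i) (z i)).symm)
  have hJc : Continuous (lpDualityMap hpq : Lp H _ μ → _) := lpDualityMap.continuous hp hpq
  refine ⟨_, lpDualityMap.coeFn_add hpq y₀ z₀, ?_⟩
  refine (lpDualityMap.uniformlyMonotone hp hpq).hammerstein_limit hpq.lt hJc ?_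
    ((hJc.tendsto y₀).comp hy) ?_ fun i => (hFJ i ▸ h_eq i :)
  · simpa only [lpInnerPairing_apply] using hB
  · simpa only [lpInnerPairing_apply] using hz

/-- If `y_k → y₀` strongly in `L^p`, `z_k → z₀` weakly in `L^p`, and each pair
solves the Hammerstein equation `z_k + B(|y_k|^{p-2}y_k + |z_k|^{p-2}z_k) = g` with a positive
continuous linear operator `B : L^q → L^p`, then the limit pair solves the limit equation. -/
theorem hammerstein_limit_equation
    {N : ℕ} (hN : 1 ≤ N)
    (Ω : Set (EuclideanSpace ℝ (Fin N))) (hΩo : IsOpen Ω)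
    (hΩb : Bornology.IsBounded Ω)
    (p q : ℝ) (hp : 2 ≤ p) (hq : q = p / (p - 1))
    [Fact (1 ≤ ENNReal.ofReal p)] [Fact (1 ≤ ENNReal.ofReal q)]
    (μ : Measure (EuclideanSpace ℝ (Fin N))) (hμ : μ = volume.restrict Ω)
    (B : Lp ℝ (ENNReal.ofReal q) μ →L[ℝ] Lp ℝ (ENNReal.ofReal p) μ)
    (hBpos : ∀ w : Lp ℝ (ENNReal.ofReal q) μ, 0 ≤ ∫ x, (B w) x * w x ∂μ)
    (g : Lp ℝ (ENNReal.ofReal p) μ)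
    (y z : ℕ → Lp ℝ (ENNReal.ofReal p) μ)
    (y₀ z₀ : Lp ℝ (ENNReal.ofReal p) μ)
    -- strong convergence y_k → y₀ in L^p
    (hy : Tendsto (fun k => ‖y k - y₀‖) atTop (𝓝 0))
    -- weak convergence z_k → z₀ in L^p
    (hz : ∀ w : Lp ℝ (ENNReal.ofReal q) μ,
      Tendsto (fun k => ∫ x, (z k) x * w x ∂μ) atTop (𝓝 (∫ x, z₀ x * w x ∂μ)))
    -- the Hammerstein equation holds for every k, where F k is the L^q element
    -- representing the nonlinearity |y_k|^{p-2}y_k + |z_k|^{p-2}z_k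
    (F : ℕ → Lp ℝ (ENNReal.ofReal q) μ)
    (hF : ∀ k, (F k : EuclideanSpace ℝ (Fin N) → ℝ) =ᵐ[μ]
      fun x => |(y k) x| ^ (p - 2) * (y k) x + |(z k) x| ^ (p - 2) * (z k) x)
    (heq : ∀ k, z k + B (F k) = g) :
    ∃ F₀ : Lp ℝ (ENNReal.ofReal q) μ,
      (F₀ : EuclideanSpace ℝ (Fin N) → ℝ) =ᵐ[μ]
        (fun x => |y₀ x| ^ (p - 2) * y₀ x + |z₀ x| ^ (p - 2) * z₀ x) ∧
      z₀ + B F₀ = g := by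
  have hpq := (Real.holderConjugate_iff_eq_conjExponent (by linarith)).2 hq
  exact hammerstein_limit_equation_general hp hpq B hBpos
    (tendsto_iff_norm_sub_tendsto_zero.2 hy) hz hF heq
end

section
/- Let Ω ⊆ ℝ^N be a bounded open set, p ≥ 2 a real number and q = p/(p−1). Let B : L^q(Ω) → L^p(Ω) be a strictly positive continuous linear operator, let g ∈ L^p(Ω) and h ∈ L^q(Ω) satisfy B h = g, and let y ∈ L^p(Ω). Assume there is λ > 0 such that ∫_Ω (|y|^{p−2}y + |z|^{p−2}z − h) z dx ≥ 0 for every z ∈ L^p(Ω) with ‖z‖_p > λ. Then the solution set H(y) = { z ∈ L^p(Ω) : z + B(|y|^{p−2}y + |z|^{p−2}z) = g } is sequentially compact in the norm topology of L^p(Ω): every sequence in H(y) has a subsequence converging strongly in L^p(Ω) to an element of H(y). -/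
open MeasureTheory Filter Topology

/-!
Two solutions `z₁`, `z₂` of `z + B (f(·, z)) = g`, with `wᵢ = f(·, zᵢ)`, satisfy
`B (w₁ - w₂) = -(z₁ - z₂)`, so `∫ B (w₁ - w₂) * (w₁ - w₂) = -∫ (z₁ - z₂) * (w₁ - w₂) ≤ 0` when `f`
is monotone in its second argument. Strict positivity of `B` forces `w₁ = w₂`, hence `z₁ = z₂`.
A set with at most one point is compact.
-/

lemma monotone_abs_rpow_mul_self {r : ℝ} (hr : -1 ≤ r) :
    Monotone fun t : ℝ ↦ |t| ^ r * t := by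
  refine monotone_of_odd_of_monotoneOn_nonneg (fun t ↦ by simp) fun s hs t _ hst ↦ ?_
  rcases (Set.mem_Ici.mp hs).eq_or_lt with rfl | hs_pos
  · simpa using mul_nonneg (Real.rpow_nonneg (abs_nonneg t) r) hst
  · have ht_pos : 0 < t := hs_pos.trans_le hst
    simp only [abs_of_pos hs_pos, abs_of_pos ht_pos, ← Real.rpow_add_one hs_pos.ne',
      ← Real.rpow_add_one ht_pos.ne']
    exact Real.rpow_le_rpow hs_pos.le hst (by linarith)

section Hammerstein

variable {α : Type*} [MeasurableSpace α] {μ : Measure α} {p q : ENNReal}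
  {F : Type*} [FunLike F (Lp ℝ q μ) (Lp ℝ p μ)]

/-- The solution set in `L^p` of the Hammerstein equation `z + B (f(·, z)) = g`, where `B` maps
`L^q` to `L^p`. The witness `w` is the class of `x ↦ f x (z x)`, so a solution `z` is required to
have `f(·, z)` in `L^q`. -/
def hammersteinSolutionSet (B : F) (f : α → ℝ → ℝ) (g : Lp ℝ p μ) : Set (Lp ℝ p μ) :=
  {z | ∃ w : Lp ℝ q μ, w =ᵐ[μ] (fun x ↦ f x (z x)) ∧ z + B w = g}

variable [AddMonoidHomClass F (Lp ℝ q μ) (Lp ℝ p μ)] {B : F}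

lemma eq_of_add_map_eq_of_sub_mul_sub_nonneg
    (hB : ∀ w : Lp ℝ q μ, w ≠ 0 → 0 < ∫ x, B w x * w x ∂μ)
    {z₁ z₂ : Lp ℝ p μ} {w₁ w₂ : Lp ℝ q μ} (heq : z₁ + B w₁ = z₂ + B w₂)
    (hmono : ∀ᵐ x ∂μ, 0 ≤ (w₁ x - w₂ x) * (z₁ x - z₂ x)) : w₁ = w₂ := by
  have hB_sub : B (w₁ - w₂) = z₂ - z₁ := by
    rw [map_sub, sub_eq_sub_iff_add_eq_add, add_comm, heq, add_comm]
  have hpairing : ∫ x, B (w₁ - w₂) x * (w₁ - w₂) x ∂μ ≤ 0 := by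
    rw [hB_sub]
    refine integral_nonpos_of_ae ?_
    filter_upwards [hmono, Lp.coeFn_sub w₁ w₂, Lp.coeFn_sub z₂ z₁] with x hx hw hz
    simp only [hw, hz, Pi.sub_apply, Pi.zero_apply]
    linarith
  by_contra hne
  exact (hB _ (sub_ne_zero.mpr hne)).not_ge hpairing

lemma hammersteinSolutionSet_subsingleton
    (hB : ∀ w : Lp ℝ q μ, w ≠ 0 → 0 < ∫ x, B w x * w x ∂μ)
    {f : α → ℝ → ℝ} (hf : ∀ᵐ x ∂μ, Monotone (f x)) (g : Lp ℝ p μ) :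
    (hammersteinSolutionSet B f g).Subsingleton := by
  rintro z₁ ⟨w₁, hw₁, hz₁⟩ z₂ ⟨w₂, hw₂, hz₂⟩
  have hmono : ∀ᵐ x ∂μ, 0 ≤ (w₁ x - w₂ x) * (z₁ x - z₂ x) := by
    filter_upwards [hf, hw₁, hw₂] with x hfx hx₁ hx₂
    rw [hx₁, hx₂]
    exact (hfx.monovary monotone_id).sub_mul_sub_nonneg _ _
  obtain rfl : w₁ = w₂ := eq_of_add_map_eq_of_sub_mul_sub_nonneg hB (hz₁.trans hz₂.symm) hmono
  exact add_right_cancel (hz₁.trans hz₂.symm)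

theorem hammerstein_solution_set_compact_general [Fact (1 ≤ p)]
    (hB : ∀ w : Lp ℝ q μ, w ≠ 0 → 0 < ∫ x, B w x * w x ∂μ)
    {f : α → ℝ → ℝ} (hf : ∀ᵐ x ∂μ, Monotone (f x)) (g : Lp ℝ p μ) :
    IsSeqCompact (hammersteinSolutionSet B f g) :=
  (hammersteinSolutionSet_subsingleton hB hf g).isCompact.isSeqCompact

end Hammerstein

/-- Under strict positivity of `B` and the coercivity condition, the solution set
`H(y)` of the Hammerstein equation `z + B(|y|^{p-2}y + |z|^{p-2}z) = g` is sequentially compact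
in the norm topology of `L^p(Ω)`. -/
theorem hammerstein_solution_set_compact
    {N : ℕ} (hN : 1 ≤ N)
    (Ω : Set (EuclideanSpace ℝ (Fin N))) (hΩo : IsOpen Ω)
    (hΩb : Bornology.IsBounded Ω)
    (p q : ℝ) (hp : 2 ≤ p) (hq : q = p / (p - 1))
    [Fact (1 ≤ ENNReal.ofReal p)] [Fact (1 ≤ ENNReal.ofReal q)]
    (μ : Measure (EuclideanSpace ℝ (Fin N))) (hμ : μ = volume.restrict Ω)
    (B : Lp ℝ (ENNReal.ofReal q) μ →L[ℝ] Lp ℝ (ENNReal.ofReal p) μ)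
    -- B is strictly positive
    (hBpos : ∀ w : Lp ℝ (ENNReal.ofReal q) μ, 0 ≤ ∫ x, (B w) x * w x ∂μ)
    (hBstrict : ∀ w : Lp ℝ (ENNReal.ofReal q) μ, w ≠ 0 → 0 < ∫ x, (B w) x * w x ∂μ)
    (g : Lp ℝ (ENNReal.ofReal p) μ) (h : Lp ℝ (ENNReal.ofReal q) μ)
    (hBh : B h = g)
    (y : Lp ℝ (ENNReal.ofReal p) μ)
    (lam : ℝ) (hlam : 0 < lam)
    -- coercivity: ∫ (|y|^{p-2}y + |z|^{p-2}z − h) z dx ≥ 0 whenever ‖z‖_p > λ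
    (hcoerc : ∀ z : Lp ℝ (ENNReal.ofReal p) μ, lam < ‖z‖ →
      0 ≤ ∫ x, (|y x| ^ (p - 2) * y x + |z x| ^ (p - 2) * z x - h x) * z x ∂μ)
    -- the solution set H(y)
    (H : Set (Lp ℝ (ENNReal.ofReal p) μ))
    (hH : H = {z : Lp ℝ (ENNReal.ofReal p) μ |
      ∃ F : Lp ℝ (ENNReal.ofReal q) μ,
        (F : EuclideanSpace ℝ (Fin N) → ℝ) =ᵐ[μ]
          (fun x => |y x| ^ (p - 2) * y x + |z x| ^ (p - 2) * z x) ∧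
        z + B F = g}) :
    ∀ zs : ℕ → Lp ℝ (ENNReal.ofReal p) μ, (∀ k, zs k ∈ H) →
      ∃ zlim ∈ H, ∃ φ : ℕ → ℕ, StrictMono φ ∧
        Tendsto (fun j => ‖zs (φ j) - zlim‖) atTop (𝓝 0) := by
  intro zs hzs
  have hf (x) : Monotone fun t : ℝ ↦ |y x| ^ (p - 2) * y x + |t| ^ (p - 2) * t :=
    (monotone_abs_rpow_mul_self (by linarith)).const_add _
  obtain ⟨z, hz, φ, hφ, hlim⟩ :=
    hammerstein_solution_set_compact_general hBstrict (.of_forall hf) g (fun k ↦ hH ▸ hzs k)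
  exact ⟨z, hH ▸ hz, φ, hφ, tendsto_iff_norm_sub_tendsto_zero.mp hlim⟩
end

section
/- Let Ω ⊆ ℝ^N be a bounded open set, p ≥ 2 a real number and q = p/(p−1). Let B : L^q(Ω) → L^p(Ω) be a strictly positive continuous linear operator, let g ∈ L^p(Ω) and h ∈ L^q(Ω) satisfy B h = g, and let F : L^p(Ω) → L^q(Ω) be any map. Assume there is λ > 0 such that ∫_Ω (F(z) − h) z dx ≥ 0 for every z ∈ L^p(Ω) with ‖z‖_p > λ. Then every solution z ∈ L^p(Ω) of the Hammerstein equation z + B(F(z)) = g satisfies the a priori bound ‖z‖_p ≤ λ. -/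
open MeasureTheory Filter Topology

/-!
Since `g = B h`, the equation reads `z = B h - B (F z)`. If `z ≠ 0`, then `F z ≠ h`, and strict
monotonicity of `B` between `h` and `F z` gives `⟨z, h - F z⟩ > 0`, that is `⟨z, F z - h⟩ < 0`.
The coercivity condition excludes this outside the ball of radius `λ`.
-/

section DualPairing

variable {X Y : Type*} [AddCommGroup X] [Module ℝ X] [AddCommGroup Y] [Module ℝ Y]
  {b : X →ₗ[ℝ] Y →ₗ[ℝ] ℝ}

/-- Strict monotonicity, in the sense of Minty and Browder, of a possibly nonlinear operator
`B : Y → X` between real vector spaces paired by `b`. -/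
def IsStrictlyMonotoneOperator (b : X →ₗ[ℝ] Y →ₗ[ℝ] ℝ) (B : Y → X) : Prop :=
  ∀ ⦃u v : Y⦄, u ≠ v → 0 < b (B u - B v) (u - v)

theorem isStrictlyMonotoneOperator_iff_pos
    {G : Type*} [FunLike G Y X] [AddMonoidHomClass G Y X] (B : G) :
    IsStrictlyMonotoneOperator b B ↔ ∀ w : Y, w ≠ 0 → 0 < b (B w) w := by
  refine ⟨fun hB w hw => ?_, fun hB u v huv => ?_⟩
  · simpa only [map_zero, sub_zero] using hB hw
  · rw [← map_sub]
    exact hB (u - v) (sub_ne_zero.mpr huv)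

theorem IsStrictlyMonotoneOperator.pairing_sub_neg_of_add_eq
    {B : Y → X} (hB : IsStrictlyMonotoneOperator b B)
    {z : X} {f h : Y} (hz : z + B f = B h) (hz₀ : z ≠ 0) : b z (f - h) < 0 := by
  obtain rfl : z = B h - B f := eq_sub_of_add_eq hz
  have hne : h ≠ f := fun hhf => hz₀ (by rw [hhf, sub_self])
  have hpos : 0 < b (B h - B f) (h - f) := hB hne
  rwa [← neg_sub h f, map_neg, neg_lt_zero]

end DualPairing

section LpDuality

variable {α : Type*} [MeasurableSpace α] (μ : Measure α) (p q : ENNReal) [Fact (1 ≤ p)]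
  [Fact (1 ≤ q)] [ENNReal.HolderConjugate p q]

/-- The duality pairing `⟨f, w⟩ = ∫ f w dμ` of `L^p` and `L^q` for conjugate exponents, as an
algebraic bilinear map. -/
noncomputable def lpDuality : Lp ℝ p μ →ₗ[ℝ] Lp ℝ q μ →ₗ[ℝ] ℝ :=
  ((ContinuousLinearMap.mul ℝ ℝ).lpPairing μ p q).toLinearMap₁₂

variable {μ p q}

theorem lpDuality_apply (f : Lp ℝ p μ) (w : Lp ℝ q μ) :
    lpDuality μ p q f w = ∫ x, f x * w x ∂μ :=
  (ContinuousLinearMap.mul ℝ ℝ).lpPairing_eq_integral f w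

theorem lpDuality_apply_sub (f : Lp ℝ p μ) (u v : Lp ℝ q μ) :
    lpDuality μ p q f (u - v) = ∫ x, (u x - v x) * f x ∂μ := by
  rw [lpDuality_apply]
  refine integral_congr_ae ?_
  filter_upwards [Lp.coeFn_sub u v] with x hx
  rw [hx, Pi.sub_apply, mul_comm]

end LpDuality

theorem hammerstein_apriori_bound_general
    {X Y : Type*} [SeminormedAddCommGroup X] [Module ℝ X] [AddCommGroup Y] [Module ℝ Y]
    {b : X →ₗ[ℝ] Y →ₗ[ℝ] ℝ} {B : Y → X} (hB : IsStrictlyMonotoneOperator b B)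
    {F : X → Y} {h : Y} {r : ℝ} (hr : 0 ≤ r)
    (hcoerc : ∀ z : X, r < ‖z‖ → 0 ≤ b z (F z - h)) {z : X} (hz : z + B (F z) = B h) :
    ‖z‖ ≤ r := by
  by_contra! hlt
  have hz₀ : z ≠ 0 := ne_zero_of_norm_ne_zero (hr.trans_lt hlt).ne'
  exact (hcoerc z hlt).not_gt (hB.pairing_sub_neg_of_add_eq hz hz₀)

/-- A priori bound for solutions of the Hammerstein equation `z + B(F z) = g`:
if `B` is a strictly positive continuous linear operator, `B h = g`, and
`∫ (F z − h) z dx ≥ 0` whenever `‖z‖_p > λ`, then every solution satisfies `‖z‖_p ≤ λ`. -/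
theorem hammerstein_apriori_bound
    {N : ℕ} (hN : 1 ≤ N)
    (Ω : Set (EuclideanSpace ℝ (Fin N))) (hΩo : IsOpen Ω)
    (hΩb : Bornology.IsBounded Ω)
    (p q : ℝ) (hp : 2 ≤ p) (hq : q = p / (p - 1))
    [Fact (1 ≤ ENNReal.ofReal p)] [Fact (1 ≤ ENNReal.ofReal q)]
    (μ : Measure (EuclideanSpace ℝ (Fin N))) (hμ : μ = volume.restrict Ω)
    (B : Lp ℝ (ENNReal.ofReal q) μ →L[ℝ] Lp ℝ (ENNReal.ofReal p) μ)
    -- B is strictly positive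
    (hBpos : ∀ w : Lp ℝ (ENNReal.ofReal q) μ, 0 ≤ ∫ x, (B w) x * w x ∂μ)
    (hBstrict : ∀ w : Lp ℝ (ENNReal.ofReal q) μ, w ≠ 0 → 0 < ∫ x, (B w) x * w x ∂μ)
    (g : Lp ℝ (ENNReal.ofReal p) μ) (h : Lp ℝ (ENNReal.ofReal q) μ)
    (hBh : B h = g)
    (F : Lp ℝ (ENNReal.ofReal p) μ → Lp ℝ (ENNReal.ofReal q) μ)
    (lam : ℝ) (hlam : 0 < lam)
    -- coercivity: ∫ (F(z) − h) z dx ≥ 0 whenever ‖z‖_p > λ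
    (hcoerc : ∀ z : Lp ℝ (ENNReal.ofReal p) μ, lam < ‖z‖ →
      0 ≤ ∫ x, ((F z) x - h x) * z x ∂μ) :
    ∀ z : Lp ℝ (ENNReal.ofReal p) μ, z + B (F z) = g → ‖z‖ ≤ lam := by
  have : ENNReal.HolderConjugate (ENNReal.ofReal p) (ENNReal.ofReal q) :=
    ((Real.holderConjugate_iff_eq_conjExponent (one_lt_two.trans_le hp)).mpr hq).ennrealOfReal
  simp only [← lpDuality_apply] at hBstrict
  simp only [← lpDuality_apply_sub] at hcoerc
  exact fun z hz => hammerstein_apriori_bound_general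
    ((isStrictlyMonotoneOperator_iff_pos B).mpr hBstrict) hlam.le hcoerc (hz.trans hBh.symm)
end

section
/- Let Ω ⊆ ℝ^N be a bounded open set and p ≥ 2 a real number. Suppose (y_k) and (z_k) are sequences in L^p(Ω) with y_k → y strongly in L^p(Ω) and z_k → z weakly in L^p(Ω), and that lim_{k→∞} ∫_Ω (|y_k|^{p−2}y_k + |z_k|^{p−2}z_k) z_k dx = ∫_Ω (|y|^{p−2}y + |z|^{p−2}z) z dx. Then z_k → z strongly in L^p(Ω). (This is the (𝔐)-property of the operator F(y,z) = |y|^{p−2}y + |z|^{p−2}z.) -/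
open MeasureTheory Filter Topology

/-!
Write `J f = |f|^{p-2} f`, so that `⟨J f, f⟩ = ‖f‖^p`. The map `J` is Lipschitz from bounded sets of
`L^p` to `L^q`, and the pairings bound `z_k` by Young's inequality, so `⟨J y_k - J y, z_k⟩ → 0`.
Together with `⟨J y, z_k⟩ → ⟨J y, z⟩` this turns the convergence of the pairings into `‖z_k‖ → ‖z‖`.
For `p ≥ 2`, the uniform convexity of `t ↦ |t|^p` then gives the Radon–Riesz property in the form
`2 (‖z_k - z‖ / 2)^p ≤ ‖z_k‖^p + (p - 1) ‖z‖^p - p ⟨J z, z_k⟩ → 0`.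
-/

/-- The derivative `t ↦ |t|^{p-2} t` of `t ↦ |t|^p / p`. Applied pointwise, it is the duality
mapping from `L^p` to the conjugate space `L^q`. -/
noncomputable def dualityMap (p t : ℝ) : ℝ := |t| ^ (p - 2) * t

section Real

variable {p : ℝ}

lemma abs_dualityMap (hp : p ≠ 1) (t : ℝ) : |dualityMap p t| = |t| ^ (p - 1) := by
  have hp' : p - 2 + 1 ≠ 0 := fun h ↦ hp (by linarith)
  rw [dualityMap, abs_mul, abs_of_nonneg (by positivity), ← Real.rpow_add_one' (abs_nonneg t) hp']
  ring_nf

lemma dualityMap_of_nonneg (hp : p ≠ 1) {t : ℝ} (ht : 0 ≤ t) : dualityMap p t = t ^ (p - 1) := by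
  have hJ : 0 ≤ dualityMap p t := mul_nonneg (by positivity) ht
  rw [← abs_of_nonneg hJ, abs_dualityMap hp, abs_of_nonneg ht]

lemma dualityMap_mul_self (hp : p ≠ 0) (t : ℝ) : dualityMap p t * t = |t| ^ p := by
  have hp' : p - 2 + (2 : ℕ) ≠ 0 := by simpa using hp
  rw [dualityMap, mul_assoc, ← sq, ← sq_abs, ← Real.rpow_add_natCast' (abs_nonneg t) hp']
  simp

lemma dualityMap_mul (p s t : ℝ) : dualityMap p (s * t) = dualityMap p s * dualityMap p t := by
  simp only [dualityMap, abs_mul, Real.mul_rpow (abs_nonneg s) (abs_nonneg t)]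
  ring

lemma mul_dualityMap_mul_le (hp : 1 < p) (a b : ℝ) :
    p * (dualityMap p b * a) ≤ |a| ^ p + (p - 1) * |b| ^ p := by
  have hpq := Real.HolderConjugate.conjExponent hp
  have hyoung := Real.young_inequality a (dualityMap p b) hpq
  rw [abs_dualityMap hp.ne', ← Real.rpow_mul (abs_nonneg b), hpq.sub_one_mul_conj] at hyoung
  calc p * (dualityMap p b * a) ≤ p * (|a| ^ p / p + |b| ^ p / p.conjExponent) := by
        rw [mul_comm _ a]
        gcongr
    _ = |a| ^ p + (p - 1) * |b| ^ p := by
        have : p - 1 ≠ 0 := hpq.sub_one_ne_zero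
        rw [Real.conjExponent]
        field_simp

lemma abs_half_add_rpow_add_abs_half_sub_rpow_le (hp : 2 ≤ p) (a b : ℝ) :
    |(a + b) / 2| ^ p + |(a - b) / 2| ^ p ≤ (|a| ^ p + |b| ^ p) / 2 := by
  have hp' : 1 ≤ p / 2 := by linarith
  have abs_rpow (t : ℝ) : |t| ^ p = (t ^ 2) ^ (p / 2) := by
    rw [← sq_abs, ← Real.rpow_natCast_mul (abs_nonneg t)]
    congr 1
    push_cast
    ring
  simp only [abs_rpow]
  calc (((a + b) / 2) ^ 2) ^ (p / 2) + (((a - b) / 2) ^ 2) ^ (p / 2)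
      ≤ (((a + b) / 2) ^ 2 + ((a - b) / 2) ^ 2) ^ (p / 2) :=
        Real.add_rpow_le_rpow_add (sq_nonneg _) (sq_nonneg _) hp'
    _ = (1 / 2 * a ^ 2 + 1 / 2 * b ^ 2) ^ (p / 2) := by ring_nf
    _ ≤ 1 / 2 * (a ^ 2) ^ (p / 2) + 1 / 2 * (b ^ 2) ^ (p / 2) :=
        (convexOn_rpow hp').2 (sq_nonneg a) (sq_nonneg b) (by norm_num) (by norm_num) (by norm_num)
    _ = ((a ^ 2) ^ (p / 2) + (b ^ 2) ^ (p / 2)) / 2 := by ring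

-- Bound `|(a + b) / 2| ^ p` from below by its tangent at `b` in Clarkson's inequality.
lemma two_mul_abs_sub_div_two_rpow_le (hp : 2 ≤ p) (a b : ℝ) :
    2 * (|a - b| / 2) ^ p ≤ |a| ^ p + (p - 1) * |b| ^ p - p * (dualityMap p b * a) := by
  have clarkson := abs_half_add_rpow_add_abs_half_sub_rpow_le hp a b
  have tangent := mul_dualityMap_mul_le (one_lt_two.trans_le hp) ((a + b) / 2) b
  have expand : dualityMap p b * ((a + b) / 2) = (dualityMap p b * a + |b| ^ p) / 2 := by
    rw [← dualityMap_mul_self (by linarith)]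
    ring
  rw [abs_div (a - b), abs_two] at clarkson
  rw [expand] at tangent
  linarith

lemma abs_one_sub_dualityMap_le (hp : 2 ≤ p) {t : ℝ} (ht : |t| ≤ 1) :
    |1 - dualityMap p t| ≤ (p - 1) * |1 - t| := by
  obtain ⟨-, ht1⟩ := abs_le.1 ht
  have hJ : |dualityMap p t| ≤ |t| := by
    rw [abs_dualityMap (by linarith)]
    exact Real.rpow_le_self_of_le_one (abs_nonneg t) ht (by linarith)
  rw [abs_of_nonneg (sub_nonneg.2 ((le_abs_self _).trans (hJ.trans ht))),
    abs_of_nonneg (sub_nonneg.2 ht1)]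
  rcases le_total 0 t with h0 | h0
  · have bernoulli := one_add_mul_self_le_rpow_one_add (s := t - 1) (p := p - 1)
      (by linarith) (by linarith)
    rw [add_sub_cancel] at bernoulli
    rw [dualityMap_of_nonneg (by linarith) h0]
    linarith
  · rw [abs_of_nonpos h0] at hJ
    nlinarith [neg_abs_le (dualityMap p t)]

lemma abs_dualityMap_sub_le (hp : 2 ≤ p) (a b : ℝ) :
    |dualityMap p a - dualityMap p b| ≤ (p - 1) * |a - b| * (|a| + |b|) ^ (p - 2) := by
  wlog hab : |b| ≤ |a| generalizing a b
  · simpa only [abs_sub_comm, add_comm] using this b a (le_of_not_ge hab)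
  rcases eq_or_ne a 0 with rfl | ha
  · obtain rfl : b = 0 := by simpa using hab
    simp
  obtain ⟨t, rfl⟩ : ∃ t, b = a * t := ⟨b / a, by field_simp⟩
  have ht : |t| ≤ 1 := by
    rw [abs_mul] at hab
    exact le_of_mul_le_mul_left (by simpa using hab) (abs_pos.2 ha)
  have hp1 : 0 ≤ p - 1 := by linarith
  calc |dualityMap p a - dualityMap p (a * t)|
      = |a| ^ (p - 2) * |a| * |1 - dualityMap p t| := by
        rw [dualityMap_mul, ← mul_one_sub, abs_mul, dualityMap, abs_mul,
          abs_of_nonneg (by positivity : 0 ≤ |a| ^ (p - 2))]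
    _ ≤ |a| ^ (p - 2) * |a| * ((p - 1) * |1 - t|) := by
        gcongr
        exact abs_one_sub_dualityMap_le hp ht
    _ = (p - 1) * |a - a * t| * |a| ^ (p - 2) := by
        rw [← mul_one_sub, abs_mul]
        ring
    _ ≤ (p - 1) * |a - a * t| * (|a| + |a * t|) ^ (p - 2) := by
        have ha_le : |a| ≤ |a| + |a * t| := le_add_of_nonneg_right (abs_nonneg _)
        gcongr

lemma abs_dualityMap_mul_sub_le (hp : 2 ≤ p) (a b c : ℝ) :
    |dualityMap p a * c - dualityMap p b * c| ≤
      (p - 1) * (dualityMap p (|a| + |b| + |c|) * |a - b|) := by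
  have hp1 : 0 ≤ p - 1 := by linarith
  calc |dualityMap p a * c - dualityMap p b * c|
      = |dualityMap p a - dualityMap p b| * |c| := by rw [← sub_mul, abs_mul]
    _ ≤ (p - 1) * |a - b| * (|a| + |b|) ^ (p - 2) * |c| := by
        gcongr
        exact abs_dualityMap_sub_le hp a b
    _ ≤ (p - 1) * |a - b| * (|a| + |b| + |c|) ^ (p - 2) * (|a| + |b| + |c|) := by
        have hab : |a| + |b| ≤ |a| + |b| + |c| := le_add_of_nonneg_right (abs_nonneg c)
        have hc : |c| ≤ |a| + |b| + |c| := le_add_of_nonneg_left (by positivity)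
        gcongr ?_ * ?_
        gcongr
    _ = (p - 1) * (dualityMap p (|a| + |b| + |c|) * |a - b|) := by
        rw [dualityMap, abs_of_nonneg (by positivity : 0 ≤ |a| + |b| + |c|)]
        ring

end Real

section Lp

variable {X : Type*} [MeasurableSpace X] {μ : Measure X} {p q : ℝ}

lemma integrable_abs_rpow (hp : 0 < p) {f : X → ℝ} (hf : MemLp f (ENNReal.ofReal p) μ) :
    Integrable (fun x ↦ |f x| ^ p) μ := by
  simpa [ENNReal.toReal_ofReal hp.le] using hf.integrable_norm_rpow (by simpa using hp) (by simp)

lemma integral_abs_rpow (hp : 0 < p) (f : Lp ℝ (ENNReal.ofReal p) μ) :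
    ∫ x, |f x| ^ p ∂μ = ‖f‖ ^ p := by
  have hint : 0 ≤ ∫ x, |f x| ^ p ∂μ := integral_nonneg fun x ↦ by positivity
  have hnorm : ‖f‖ = (∫ x, |f x| ^ p ∂μ) ^ p⁻¹ := by
    rw [Lp.norm_def, (Lp.memLp f).eLpNorm_eq_integral_rpow_norm (by simpa using hp) (by simp)]
    simp only [ENNReal.toReal_ofReal hp.le, Real.norm_eq_abs]
    exact ENNReal.toReal_ofReal (by positivity)
  rw [hnorm, Real.rpow_inv_rpow hint hp.ne']

lemma memLp_dualityMap (hpq : p.HolderConjugate q) {f : X → ℝ}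
    (hf : MemLp f (ENNReal.ofReal p) μ) :
    MemLp (fun x ↦ dualityMap p (f x)) (ENNReal.ofReal q) μ := by
  have hmeas : AEStronglyMeasurable (fun x ↦ dualityMap p (f x)) μ := by
    have := hf.aemeasurable
    unfold dualityMap
    exact AEMeasurable.aestronglyMeasurable (by fun_prop)
  rw [← integrable_norm_rpow_iff hmeas (by simpa using hpq.symm.pos) (by simp),
    ENNReal.toReal_ofReal hpq.symm.nonneg]
  simp only [Real.norm_eq_abs, abs_dualityMap hpq.lt.ne', ← Real.rpow_mul (abs_nonneg _),
    hpq.sub_one_mul_conj]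
  exact integrable_abs_rpow hpq.pos hf

lemma integrable_dualityMap_mul (hp : 1 < p) {f g : X → ℝ} (hf : MemLp f (ENNReal.ofReal p) μ)
    (hg : MemLp g (ENNReal.ofReal p) μ) : Integrable (fun x ↦ dualityMap p (f x) * g x) μ := by
  have hpq := Real.HolderConjugate.conjExponent hp
  have := hpq.symm.ennrealOfReal
  exact (memLp_dualityMap hpq hf).integrable_mul hg

/-- The duality pairing `⟨J f, g⟩ = ∫ |f|^{p-2} f g dμ` of `L^q` and `L^p`, where `J` is the
duality mapping. -/
noncomputable def dualityPairing (f g : Lp ℝ (ENNReal.ofReal p) μ) : ℝ :=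
  ∫ x, dualityMap p (f x) * g x ∂μ

lemma dualityPairing_self (hp : 0 < p) (f : Lp ℝ (ENNReal.ofReal p) μ) :
    dualityPairing f f = ‖f‖ ^ p := by
  simp only [dualityPairing, dualityMap_mul_self hp.ne', integral_abs_rpow hp]

lemma integral_dualityMap_add_mul (hp : 1 < p) (f g : Lp ℝ (ENNReal.ofReal p) μ) :
    ∫ x, (dualityMap p (f x) + dualityMap p (g x)) * g x ∂μ = dualityPairing f g + ‖g‖ ^ p := by
  simp only [add_mul]
  rw [integral_add (integrable_dualityMap_mul hp (Lp.memLp f) (Lp.memLp g))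
    (integrable_dualityMap_mul hp (Lp.memLp g) (Lp.memLp g)),
    ← dualityPairing_self (by linarith)]
  rfl

variable [Fact (1 ≤ ENNReal.ofReal p)]

lemma abs_dualityPairing_le (hp : 1 < p) (f g : Lp ℝ (ENNReal.ofReal p) μ) :
    |dualityPairing f g| ≤ ‖f‖ ^ (p - 1) * ‖g‖ := by
  have hpq := Real.HolderConjugate.conjExponent hp
  have hexp : p * (1 / p.conjExponent) = p - 1 := by
    rw [mul_one_div, div_eq_iff hpq.symm.ne_zero, hpq.sub_one_mul_conj]
  calc |dualityPairing f g| ≤ ∫ x, ‖dualityMap p (f x)‖ * ‖g x‖ ∂μ := by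
        simpa only [dualityPairing, norm_mul, Real.norm_eq_abs] using
          norm_integral_le_integral_norm (fun x ↦ dualityMap p (f x) * g x) (μ := μ)
    _ ≤ (∫ x, ‖dualityMap p (f x)‖ ^ p.conjExponent ∂μ) ^ (1 / p.conjExponent) *
          (∫ x, ‖g x‖ ^ p ∂μ) ^ (1 / p) :=
        integral_mul_norm_le_Lp_mul_Lq hpq.symm (memLp_dualityMap hpq (Lp.memLp f)) (Lp.memLp g)
    _ = ‖f‖ ^ (p - 1) * ‖g‖ := by
        simp only [Real.norm_eq_abs, abs_dualityMap hp.ne', ← Real.rpow_mul (abs_nonneg _),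
          hpq.sub_one_mul_conj, integral_abs_rpow hpq.pos]
        rw [← Real.rpow_mul (norm_nonneg f), ← Real.rpow_mul (norm_nonneg g), hexp,
          mul_one_div_cancel hpq.ne_zero, Real.rpow_one]

-- Coercivity of `g ↦ ⟨J f + J g, g⟩`.
lemma sub_one_mul_norm_rpow_le (hp : 1 < p) (f g : Lp ℝ (ENNReal.ofReal p) μ) :
    (p - 1) * ‖g‖ ^ p ≤ p * (dualityPairing f g + ‖g‖ ^ p) + (p - 1) * ‖f‖ ^ p := by
  have young := mul_dualityMap_mul_le hp ‖g‖ ‖f‖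
  rw [dualityMap_of_nonneg hp.ne' (norm_nonneg f), abs_norm, abs_norm] at young
  have holder := (abs_le.1 (abs_dualityPairing_le hp f g)).1
  nlinarith

lemma abs_dualityPairing_sub_le (hp : 2 ≤ p) (f g h : Lp ℝ (ENNReal.ofReal p) μ) :
    |dualityPairing f h - dualityPairing g h| ≤
      (p - 1) * ((‖f‖ + ‖g‖ + ‖h‖) ^ (p - 1) * ‖f - g‖) := by
  have hp1 : 0 ≤ p - 1 := by linarith
  have integrable (f g : Lp ℝ (ENNReal.ofReal p) μ) :=
    integrable_dualityMap_mul (by linarith) (Lp.memLp f) (Lp.memLp g)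
  have norm_sum_le : ‖|f| + |g| + |h|‖ ≤ ‖f‖ + ‖g‖ + ‖h‖ := by
    simpa only [norm_abs_eq_norm] using norm_add₃_le (a := |f|) (b := |g|) (c := |h|)
  have pointwise : ∀ᵐ x ∂μ, ‖dualityMap p (f x) * h x - dualityMap p (g x) * h x‖ ≤
      (p - 1) * (dualityMap p ((|f| + |g| + |h|) x) * |f - g| x) := by
    filter_upwards [Lp.coeFn_abs f, Lp.coeFn_abs g, Lp.coeFn_abs h, Lp.coeFn_abs (f - g),
      Lp.coeFn_sub f g, Lp.coeFn_add |f| |g|, Lp.coeFn_add (|f| + |g|) |h|]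
      with x hf hg hh hfg hsub hadd hadd'
    rw [hadd', Pi.add_apply, hadd, Pi.add_apply, hf, hg, hh, hfg, hsub, Pi.sub_apply]
    exact abs_dualityMap_mul_sub_le hp _ _ _
  calc |dualityPairing f h - dualityPairing g h|
      = ‖∫ x, dualityMap p (f x) * h x - dualityMap p (g x) * h x ∂μ‖ := by
        rw [integral_sub (integrable f h) (integrable g h)]
        rfl
    _ ≤ ∫ x, (p - 1) * (dualityMap p ((|f| + |g| + |h|) x) * |f - g| x) ∂μ :=
        norm_integral_le_of_norm_le ((integrable _ _).const_mul _) pointwise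
    _ = (p - 1) * dualityPairing (|f| + |g| + |h|) |f - g| := integral_const_mul _ _
    _ ≤ (p - 1) * (‖|f| + |g| + |h|‖ ^ (p - 1) * ‖|f - g|‖) := by
        gcongr
        exact (le_abs_self _).trans (abs_dualityPairing_le (by linarith) _ _)
    _ ≤ (p - 1) * ((‖f‖ + ‖g‖ + ‖h‖) ^ (p - 1) * ‖f - g‖) := by
        rw [norm_abs_eq_norm (f - g)]
        gcongr

lemma two_mul_norm_sub_div_two_rpow_le (hp : 2 ≤ p) (f g : Lp ℝ (ENNReal.ofReal p) μ) :
    2 * (‖f - g‖ / 2) ^ p ≤ ‖f‖ ^ p + (p - 1) * ‖g‖ ^ p - p * dualityPairing g f := by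
  have hp0 : 0 < p := by linarith
  have hf := integrable_abs_rpow hp0 (Lp.memLp f)
  have hg := (integrable_abs_rpow hp0 (Lp.memLp g)).const_mul (p - 1)
  have hfg : Integrable (fun x ↦ |f x| ^ p + (p - 1) * |g x| ^ p) μ := hf.add hg
  have hgf := (integrable_dualityMap_mul (by linarith) (Lp.memLp g) (Lp.memLp f)).const_mul p
  have pointwise : ∀ᵐ x ∂μ, 2 / 2 ^ p * |(f - g) x| ^ p ≤
      |f x| ^ p + (p - 1) * |g x| ^ p - p * (dualityMap p (g x) * f x) := by
    filter_upwards [Lp.coeFn_sub f g] with x hx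
    rw [hx, Pi.sub_apply, div_mul_comm, ← Real.div_rpow (abs_nonneg _) two_pos.le, mul_comm]
    exact two_mul_abs_sub_div_two_rpow_le hp (f x) (g x)
  calc 2 * (‖f - g‖ / 2) ^ p = ∫ x, 2 / 2 ^ p * |(f - g) x| ^ p ∂μ := by
        rw [integral_const_mul, integral_abs_rpow hp0, Real.div_rpow (norm_nonneg _) two_pos.le]
        ring
    _ ≤ ∫ x, |f x| ^ p + (p - 1) * |g x| ^ p - p * (dualityMap p (g x) * f x) ∂μ :=
        integral_mono_ae ((integrable_abs_rpow hp0 (Lp.memLp (f - g))).const_mul _)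
          (hfg.sub hgf) pointwise
    _ = ‖f‖ ^ p + (p - 1) * ‖g‖ ^ p - p * dualityPairing g f := by
        rw [integral_sub hfg hgf, integral_add hf hg, integral_const_mul,
          integral_const_mul, integral_abs_rpow hp0, integral_abs_rpow hp0, dualityPairing]

end Lp

section Convergence

variable {X ι : Type*} [MeasurableSpace X] {μ : Measure X} {p q : ℝ} {l : Filter ι}

lemma tendsto_of_tendsto_rpow (hp : 0 < p) {u : ι → ℝ} {a : ℝ} (hu : ∀ i, 0 ≤ u i) (ha : 0 ≤ a)
    (h : Tendsto (fun i ↦ u i ^ p) l (𝓝 (a ^ p))) : Tendsto u l (𝓝 a) := by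
  simpa only [Real.rpow_rpow_inv (hu _) hp.ne', Real.rpow_rpow_inv ha hp.ne'] using
    h.rpow_const (p := p⁻¹) (Or.inr (by positivity))

lemma tendsto_dualityPairing_right (hpq : p.HolderConjugate q)
    (f : Lp ℝ (ENNReal.ofReal p) μ) {z : ι → Lp ℝ (ENNReal.ofReal p) μ}
    {z₀ : Lp ℝ (ENNReal.ofReal p) μ}
    (hz : ∀ w : Lp ℝ (ENNReal.ofReal q) μ,
      Tendsto (fun i ↦ ∫ x, z i x * w x ∂μ) l (𝓝 (∫ x, z₀ x * w x ∂μ))) :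
    Tendsto (fun i ↦ dualityPairing f (z i)) l (𝓝 (dualityPairing f z₀)) := by
  have hJ := memLp_dualityMap hpq (Lp.memLp f)
  have integral_eq (g : Lp ℝ (ENNReal.ofReal p) μ) :
      ∫ x, g x * hJ.toLp _ x ∂μ = dualityPairing f g := by
    refine integral_congr_ae ?_
    filter_upwards [hJ.coeFn_toLp] with x hx
    rw [hx, mul_comm]
  simpa only [integral_eq] using hz (hJ.toLp _)

variable [Fact (1 ≤ ENNReal.ofReal p)] {y z : ι → Lp ℝ (ENNReal.ofReal p) μ}
  {y₀ z₀ : Lp ℝ (ENNReal.ofReal p) μ}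

lemma tendsto_dualityPairing_sub_dualityPairing (hp : 2 ≤ p) (hy : Tendsto y l (𝓝 y₀))
    (hz : l.IsBoundedUnder (· ≤ ·) fun i ↦ ‖z i‖) :
    Tendsto (fun i ↦ dualityPairing (y i) (z i) - dualityPairing y₀ (z i)) l (𝓝 0) := by
  obtain ⟨C, hC⟩ := hz
  have hp1 : 0 ≤ p - 1 := by linarith
  have bound : Tendsto (fun i ↦ (p - 1) * ((‖y i‖ + ‖y₀‖ + C) ^ (p - 1) * ‖y i - y₀‖)) l (𝓝 0) := by
    simpa using (((((hy.norm.add_const ‖y₀‖).add_const C).rpow_const (Or.inr hp1)).mul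
      (tendsto_iff_norm_sub_tendsto_zero.1 hy)).const_mul (p - 1))
  refine squeeze_zero_norm' ?_ bound
  filter_upwards [eventually_map.1 hC] with i hi
  refine (abs_dualityPairing_sub_le hp (y i) y₀ (z i)).trans ?_
  gcongr

lemma isBoundedUnder_norm_of_tendsto_dualityPairing_add (hp : 1 < p) (hy : Tendsto y l (𝓝 y₀))
    {c : ℝ} (h : Tendsto (fun i ↦ dualityPairing (y i) (z i) + ‖z i‖ ^ p) l (𝓝 c)) :
    l.IsBoundedUnder (· ≤ ·) fun i ↦ ‖z i‖ := by
  have hp0 : 0 < p := by linarith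
  have hp1 : 0 < p - 1 := by linarith
  have bound := (((h.const_mul p).add ((hy.norm.rpow_const (Or.inr hp0.le)).const_mul
    (p - 1))).div_const (p - 1)).rpow_const (p := p⁻¹) (Or.inr (by positivity))
  refine bound.isBoundedUnder_le.mono_le (Eventually.of_forall fun i ↦ ?_)
  have hi : ‖z i‖ ^ p ≤
      (p * (dualityPairing (y i) (z i) + ‖z i‖ ^ p) + (p - 1) * ‖y i‖ ^ p) / (p - 1) := by
    rw [le_div_iff₀' hp1]
    exact sub_one_mul_norm_rpow_le hp (y i) (z i)
  calc ‖z i‖ = (‖z i‖ ^ p) ^ p⁻¹ := (Real.rpow_rpow_inv (norm_nonneg _) hp0.ne').symm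
    _ ≤ _ := Real.rpow_le_rpow (by positivity) hi (by positivity)

theorem tendsto_of_tendsto_norm_of_tendsto_dualityPairing (hp : 2 ≤ p)
    (hnorm : Tendsto (fun i ↦ ‖z i‖) l (𝓝 ‖z₀‖))
    (hpair : Tendsto (fun i ↦ dualityPairing z₀ (z i)) l (𝓝 (dualityPairing z₀ z₀))) :
    Tendsto z l (𝓝 z₀) := by
  have hp0 : 0 < p := by linarith
  have bound : Tendsto (fun i ↦ ‖z i‖ ^ p + (p - 1) * ‖z₀‖ ^ p - p * dualityPairing z₀ (z i)) l
      (𝓝 0) := by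
    have limit : ‖z₀‖ ^ p + (p - 1) * ‖z₀‖ ^ p - p * dualityPairing z₀ z₀ = 0 := by
      rw [dualityPairing_self hp0]
      ring
    rw [← limit]
    exact ((hnorm.rpow_const (Or.inr hp0.le)).add_const _).sub (hpair.const_mul p)
  have half_rpow : Tendsto (fun i ↦ (‖z i - z₀‖ / 2) ^ p) l (𝓝 (0 ^ p)) := by
    rw [Real.zero_rpow hp0.ne']
    refine squeeze_zero (fun i ↦ by positivity) (fun i ↦ ?_) bound
    have hi := two_mul_norm_sub_div_two_rpow_le hp (z i) z₀
    have : 0 ≤ (‖z i - z₀‖ / 2) ^ p := by positivity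
    linarith
  have half := tendsto_of_tendsto_rpow hp0 (fun i ↦ by positivity) le_rfl half_rpow
  rw [tendsto_iff_norm_sub_tendsto_zero]
  simpa using half.mul_const 2

theorem F_M_property_general (hp : 2 ≤ p) (hpq : p.HolderConjugate q) (hy : Tendsto y l (𝓝 y₀))
    (hz : ∀ w : Lp ℝ (ENNReal.ofReal q) μ,
      Tendsto (fun i ↦ ∫ x, z i x * w x ∂μ) l (𝓝 (∫ x, z₀ x * w x ∂μ)))
    (hpair : Tendsto
      (fun i ↦ ∫ x, (dualityMap p (y i x) + dualityMap p (z i x)) * z i x ∂μ) l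
      (𝓝 (∫ x, (dualityMap p (y₀ x) + dualityMap p (z₀ x)) * z₀ x ∂μ))) :
    Tendsto z l (𝓝 z₀) := by
  have weak (f : Lp ℝ (ENNReal.ofReal p) μ) := tendsto_dualityPairing_right hpq f hz
  simp only [integral_dualityMap_add_mul hpq.lt] at hpair
  have bounded := isBoundedUnder_norm_of_tendsto_dualityPairing_add hpq.lt hy hpair
  have pairing_y : Tendsto (fun i ↦ dualityPairing (y i) (z i)) l (𝓝 (dualityPairing y₀ z₀)) := by
    simpa using (tendsto_dualityPairing_sub_dualityPairing hp hy bounded).add (weak y₀)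
  have norm_rpow : Tendsto (fun i ↦ ‖z i‖ ^ p) l (𝓝 (‖z₀‖ ^ p)) := by
    simpa using hpair.sub pairing_y
  have norm := tendsto_of_tendsto_rpow hpq.pos (fun i ↦ norm_nonneg (z i)) (norm_nonneg z₀)
    norm_rpow
  exact tendsto_of_tendsto_norm_of_tendsto_dualityPairing hp norm (weak z₀)

end Convergence

/-- the (𝔐)-property of `F(y,z) = |y|^{p-2}y + |z|^{p-2}z`: if `y_k → y` strongly
in `L^p`, `z_k → z` weakly in `L^p`, and `∫ F(y_k,z_k) z_k dx → ∫ F(y,z) z dx`, then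
`z_k → z` strongly in `L^p`. -/
theorem F_M_property
    {N : ℕ} (hN : 1 ≤ N)
    (Ω : Set (EuclideanSpace ℝ (Fin N))) (hΩo : IsOpen Ω)
    (hΩb : Bornology.IsBounded Ω)
    (p q : ℝ) (hp : 2 ≤ p) (hq : q = p / (p - 1))
    [Fact (1 ≤ ENNReal.ofReal p)] [Fact (1 ≤ ENNReal.ofReal q)]
    (μ : Measure (EuclideanSpace ℝ (Fin N))) (hμ : μ = volume.restrict Ω)
    (y z : ℕ → Lp ℝ (ENNReal.ofReal p) μ)
    (y₀ z₀ : Lp ℝ (ENNReal.ofReal p) μ)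
    -- strong convergence y_k → y₀ in L^p
    (hy : Tendsto (fun k => ‖y k - y₀‖) atTop (𝓝 0))
    -- weak convergence z_k → z₀ in L^p
    (hz : ∀ w : Lp ℝ (ENNReal.ofReal q) μ,
      Tendsto (fun k => ∫ x, (z k) x * w x ∂μ) atTop (𝓝 (∫ x, z₀ x * w x ∂μ)))
    -- convergence of the pairings ⟨F(y_k,z_k), z_k⟩ → ⟨F(y₀,z₀), z₀⟩
    (hpair : Tendsto
      (fun k => ∫ x, (|(y k) x| ^ (p - 2) * (y k) x + |(z k) x| ^ (p - 2) * (z k) x) * (z k) x ∂μ)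
      atTop
      (𝓝 (∫ x, (|y₀ x| ^ (p - 2) * y₀ x + |z₀ x| ^ (p - 2) * z₀ x) * z₀ x ∂μ))) :
    Tendsto (fun k => ‖z k - z₀‖) atTop (𝓝 0) := by
  have hpq : p.HolderConjugate q := (Real.holderConjugate_iff_eq_conjExponent (by linarith)).2 hq
  exact tendsto_iff_norm_sub_tendsto_zero.1 <|
    F_M_property_general hp hpq (tendsto_iff_norm_sub_tendsto_zero.2 hy) hz hpair
end
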